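/- arXiv:2504.03637 — 2 statements merged into one kernel-verified Lean document; each statement's English description precedes it below -/
import Mathlib

section
/- Let P_i and P_j be real 3×4 matrices of rank 3 with distinct centers. Then the linear map from the 9-dimensional space of real 3×3 matrices to the space of real 4×4 matrices given by F ↦ P_jᵀ F P_i + P_iᵀ Fᵀ P_j has a one-dimensional kernel, namely the span of 𝓕(P_i, P_j); equivalently, this linear map has rank 8. -/
open Matrix

/-- The fundamental matrix of a camera pair `(P, Q)` of `3 × 4` matrices:
its `(h,k)` entry is `(-1)^(h+k)` times the determinant of the `4 × 4` matrix
obtained by stacking the rows of `P` other than row `k` (in their original order)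
on top of the rows of `Q` other than row `h` (in their original order). -/
def fund {K : Type*} [CommRing K] (P Q : Matrix (Fin 3) (Fin 4) K) :
    Matrix (Fin 3) (Fin 3) K :=
  Matrix.of fun h k =>
    (-1 : K) ^ ((h : ℕ) + (k : ℕ)) *
      (Matrix.of fun r c : Fin 4 =>
          if hr : (r : ℕ) < 2 then P (k.succAbove ⟨(r : ℕ), hr⟩) c
          else Q (h.succAbove ⟨(r : ℕ) - 2, by have := r.isLt; omega⟩) c).det

/-- The linear map `F ↦ Pjᵀ F Pi + Piᵀ Fᵀ Pj` from `3 × 3` matrices to `4 × 4`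
matrices (the epipolar constraint, linear in the fundamental matrix). -/
def epiMap (Pi Pj : Matrix (Fin 3) (Fin 4) ℝ) :
    Matrix (Fin 3) (Fin 3) ℝ →ₗ[ℝ] Matrix (Fin 4) (Fin 4) ℝ where
  toFun F := Pjᵀ * F * Pi + Piᵀ * Fᵀ * Pj
  map_add' F G := by
    simp [Matrix.transpose_add, Matrix.add_mul, Matrix.mul_add]
    abel
  map_smul' c F := by
    simp [Matrix.transpose_smul, Matrix.smul_mul, Matrix.mul_smul, smul_add]

def E1c : Matrix (Fin 3) (Fin 4) ℝ := !![1,0,0,0;0,1,0,0;0,0,1,0]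
def E2c : Matrix (Fin 3) (Fin 4) ℝ := !![1,0,0,0;0,1,0,0;0,0,0,1]

/-- cross product of two columns -/
def cr (P : Matrix (Fin 3) (Fin 4) ℝ) (a b : Fin 4) : Fin 3 → ℝ :=
  ![P 1 a * P 2 b - P 1 b * P 2 a, P 2 a * P 0 b - P 2 b * P 0 a, P 0 a * P 1 b - P 0 b * P 1 a]

lemma det_four (A : Matrix (Fin 4) (Fin 4) ℝ) : A.det =
    (A 0 0 * A 1 1 - A 0 1 * A 1 0) * (A 2 2 * A 3 3 - A 2 3 * A 3 2)
    - (A 0 0 * A 1 2 - A 0 2 * A 1 0) * (A 2 1 * A 3 3 - A 2 3 * A 3 1)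
    + (A 0 0 * A 1 3 - A 0 3 * A 1 0) * (A 2 1 * A 3 2 - A 2 2 * A 3 1)
    + (A 0 1 * A 1 2 - A 0 2 * A 1 1) * (A 2 0 * A 3 3 - A 2 3 * A 3 0)
    - (A 0 1 * A 1 3 - A 0 3 * A 1 1) * (A 2 0 * A 3 2 - A 2 2 * A 3 0)
    + (A 0 2 * A 1 3 - A 0 3 * A 1 2) * (A 2 0 * A 3 1 - A 2 1 * A 3 0) := by
  rw [Matrix.det_succ_row_zero]
  simp [Fin.sum_univ_four, Matrix.det_fin_three, Fin.succAbove]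
  ring

lemma fund_eq (P Q : Matrix (Fin 3) (Fin 4) ℝ) (h k : Fin 3) :
    fund P Q h k = cr P 0 1 k * cr Q 2 3 h - cr P 0 2 k * cr Q 1 3 h + cr P 0 3 k * cr Q 1 2 h
      + cr P 1 2 k * cr Q 0 3 h - cr P 1 3 k * cr Q 0 2 h + cr P 2 3 k * cr Q 0 1 h := by
  rw [fund, Matrix.of_apply, det_four]
  have r : ∀ c : Fin 4, (Matrix.of fun r c : Fin 4 =>
          if hr : (r : ℕ) < 2 then P (k.succAbove ⟨(r : ℕ), hr⟩) c
          else Q (h.succAbove ⟨(r : ℕ) - 2, by have := r.isLt; omega⟩) c) 0 c = P (k.succAbove 0) c ∧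
      (Matrix.of fun r c : Fin 4 =>
          if hr : (r : ℕ) < 2 then P (k.succAbove ⟨(r : ℕ), hr⟩) c
          else Q (h.succAbove ⟨(r : ℕ) - 2, by have := r.isLt; omega⟩) c) 1 c = P (k.succAbove 1) c ∧
      (Matrix.of fun r c : Fin 4 =>
          if hr : (r : ℕ) < 2 then P (k.succAbove ⟨(r : ℕ), hr⟩) c
          else Q (h.succAbove ⟨(r : ℕ) - 2, by have := r.isLt; omega⟩) c) 2 c = Q (h.succAbove 0) c ∧
      (Matrix.of fun r c : Fin 4 =>
          if hr : (r : ℕ) < 2 then P (k.succAbove ⟨(r : ℕ), hr⟩) c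
          else Q (h.succAbove ⟨(r : ℕ) - 2, by have := r.isLt; omega⟩) c) 3 c = Q (h.succAbove 1) c :=
    fun c => ⟨rfl, rfl, rfl, rfl⟩
  simp only [(r _).1, (r _).2.1, (r _).2.2.1, (r _).2.2.2]
  clear r
  have s00 : (0 : Fin 3).succAbove (0 : Fin 2) = 1 := rfl
  have s01 : (0 : Fin 3).succAbove (1 : Fin 2) = 2 := rfl
  have s10 : (1 : Fin 3).succAbove (0 : Fin 2) = 0 := rfl
  have s11 : (1 : Fin 3).succAbove (1 : Fin 2) = 2 := rfl
  have s20 : (2 : Fin 3).succAbove (0 : Fin 2) = 0 := rfl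
  have s21 : (2 : Fin 3).succAbove (1 : Fin 2) = 1 := rfl
  fin_cases h <;> fin_cases k <;>
  · simp only [Fin.zero_eta, Fin.mk_one, Fin.reduceFinMk, s00, s01, s10, s11, s20, s21]
    simp [cr]
    try ring

lemma cr_mul (N : Matrix (Fin 3) (Fin 3) ℝ) (Q : Matrix (Fin 3) (Fin 4) ℝ) (a b : Fin 4) (h : Fin 3) :
    N 0 h * cr (N * Q) a b 0 + N 1 h * cr (N * Q) a b 1 + N 2 h * cr (N * Q) a b 2
      = N.det * cr Q a b h := by
  fin_cases h <;>
  · simp [cr, Matrix.det_fin_three, Matrix.mul_apply, Fin.sum_univ_three]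
    ring

lemma fund_left (N : Matrix (Fin 3) (Fin 3) ℝ) (P Q : Matrix (Fin 3) (Fin 4) ℝ) :
    Nᵀ * fund P (N * Q) = N.det • fund P Q := by
  ext h k
  simp only [Matrix.mul_apply, Fin.sum_univ_three, Matrix.transpose_apply, Matrix.smul_apply, smul_eq_mul, fund_eq]
  have H := fun a b => cr_mul N Q a b h
  linear_combination cr P 0 1 k * H 2 3 - cr P 0 2 k * H 1 3 + cr P 0 3 k * H 1 2
      + cr P 1 2 k * H 0 3 - cr P 1 3 k * H 0 2 + cr P 2 3 k * H 0 1

lemma fund_right (M : Matrix (Fin 3) (Fin 3) ℝ) (P Q : Matrix (Fin 3) (Fin 4) ℝ) :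
    fund (M * P) Q * M = M.det • fund P Q := by
  ext h k
  simp only [Matrix.mul_apply (M := fund _ _), Fin.sum_univ_three, Matrix.smul_apply, smul_eq_mul, fund_eq]
  have H := fun a b => cr_mul M P a b k
  linear_combination cr Q 2 3 h * H 0 1 - cr Q 1 3 h * H 0 2 + cr Q 1 2 h * H 0 3
      + cr Q 0 3 h * H 1 2 - cr Q 0 2 h * H 1 3 + cr Q 0 1 h * H 2 3

lemma fund_mul (B : Matrix (Fin 4) (Fin 4) ℝ) (P Q : Matrix (Fin 3) (Fin 4) ℝ) :
    fund (P * B) (Q * B) = B.det • fund P Q := by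
  ext h k
  simp only [fund, Matrix.of_apply, Matrix.smul_apply, smul_eq_mul]
  rw [mul_left_comm, mul_comm B.det, ← Matrix.det_mul]
  congr 2
  ext r c
  simp only [Matrix.of_apply, Matrix.mul_apply]
  split_ifs <;> rfl

lemma fund_E : fund E1c E2c = !![0,1,0;-1,0,0;0,0,0] := by
  ext h k
  rw [fund_eq]
  fin_cases h <;> fin_cases k <;> simp [cr, E1c, E2c]

lemma ker_E (G : Matrix (Fin 3) (Fin 3) ℝ) :
    E2cᵀ * G * E1c + E1cᵀ * Gᵀ * E2c = 0 ↔ ∃ c : ℝ, G = c • fund E1c E2c := by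
  rw [fund_E]
  constructor
  · intro H
    have H := fun a b => congrFun (congrFun H a) b
    refine ⟨G 0 1, ?_⟩
    simp [E1c, E2c, Matrix.mul_apply, Fin.sum_univ_three, Fin.forall_fin_succ] at H
    ext i j
    fin_cases i <;> fin_cases j <;> simp <;> grind
  · rintro ⟨c, rfl⟩
    ext a b
    fin_cases a <;> fin_cases b <;>
      simp [E1c, E2c, Matrix.mul_apply, Fin.sum_univ_three]

lemma exists_ker (P Q : Matrix (Fin 3) (Fin 4) ℝ) (hi : P.rank = 3) (hj : Q.rank = 3)
    (hc : LinearMap.ker P.mulVecLin ≠ LinearMap.ker Q.mulVecLin) :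
    ∃ x, P *ᵥ x = 0 ∧ Q *ᵥ x ≠ 0 := by
  by_contra! H
  apply hc
  apply Submodule.eq_of_le_of_finrank_eq
  · intro x hx
    exact H x hx
  · have h1 := P.mulVecLin.finrank_range_add_finrank_ker
    have h2 := Q.mulVecLin.finrank_range_add_finrank_ker
    rw [Matrix.rank] at hi hj
    omega

lemma det_ne_of_rank {n : ℕ} (M : Matrix (Fin n) (Fin n) ℝ) (h : n ≤ M.rank) : M.det ≠ 0 := by
  have h2 : M.rank = n := le_antisymm (by simpa using M.rank_le_card_width) h
  have : LinearIndependent ℝ M.row := by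
    rw [linearIndependent_iff_card_eq_finrank_span, Set.finrank, ← Matrix.rank_eq_finrank_span_row, h2]
    simp
  have h3 := Matrix.linearIndependent_rows_iff_isUnit.1 this
  exact ((Matrix.isUnit_iff_isUnit_det _).1 h3).ne_zero

lemma normal_form (P Q : Matrix (Fin 3) (Fin 4) ℝ) (hi : P.rank = 3) (hj : Q.rank = 3)
    (hc : LinearMap.ker P.mulVecLin ≠ LinearMap.ker Q.mulVecLin) :
    ∃ (A : Matrix (Fin 4) (Fin 4) ℝ) (M N : Matrix (Fin 3) (Fin 3) ℝ),
      A.det ≠ 0 ∧ M.det ≠ 0 ∧ N.det ≠ 0 ∧ P * A = M * E1c ∧ Q * A = N * E2c := by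
  obtain ⟨x, hx, hx'⟩ := exists_ker P Q hi hj hc
  obtain ⟨y, hy, hy'⟩ := exists_ker Q P hj hi hc.symm
  have li : LinearIndependent ℝ ![y, x] := by
    rw [LinearIndependent.pair_iff]
    intro s t h
    have h1 := congrArg (P *ᵥ ·) h
    have h2 := congrArg (Q *ᵥ ·) h
    simp [Matrix.mulVec_add, Matrix.mulVec_smul, hx, hy, hx', hy'] at h1 h2
    exact ⟨h1, h2⟩
  obtain ⟨b, li⟩ := exists_linearIndependent_cons_of_lt_finrank (n := 2) li (by simp)
  obtain ⟨a, li⟩ := exists_linearIndependent_cons_of_lt_finrank (n := 3) li (by simp)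
  have hA : IsUnit (Matrix.of ![a, b, y, x]) := Matrix.linearIndependent_rows_iff_isUnit.1 li
  have hd : (Matrix.of ![a, b, y, x])ᵀ.det ≠ 0 := by
    rw [Matrix.det_transpose]
    exact ((Matrix.isUnit_iff_isUnit_det _).1 hA).ne_zero
  have e1 : P * (Matrix.of ![a, b, y, x])ᵀ = (Matrix.of ![P *ᵥ a, P *ᵥ b, P *ᵥ y])ᵀ * E1c := by
    ext i j
    have hx := congrFun hx i
    simp only [Matrix.mulVec, dotProduct, Pi.zero_apply] at hx
    fin_cases j <;> simp [Matrix.mul_apply, Fin.sum_univ_three, E1c, Matrix.mulVec, dotProduct, hx]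
  have e2 : Q * (Matrix.of ![a, b, y, x])ᵀ = (Matrix.of ![Q *ᵥ a, Q *ᵥ b, Q *ᵥ x])ᵀ * E2c := by
    ext i j
    have hy := congrFun hy i
    simp only [Matrix.mulVec, dotProduct, Pi.zero_apply] at hy
    fin_cases j <;> simp [Matrix.mul_apply, Fin.sum_univ_three, E2c, Matrix.mulVec, dotProduct, hy]
  refine ⟨_, _, _, hd, ?_, ?_, e1, e2⟩
  · apply det_ne_of_rank
    refine hi.symm.le.trans ?_
    rw [← Matrix.rank_mul_eq_left_of_isUnit_det _ P (isUnit_iff_ne_zero.2 hd), e1]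
    exact Matrix.rank_mul_le_left _ _
  · apply det_ne_of_rank
    refine hj.symm.le.trans ?_
    rw [← Matrix.rank_mul_eq_left_of_isUnit_det _ Q (isUnit_iff_ne_zero.2 hd), e2]
    exact Matrix.rank_mul_le_left _ _

/-- for cameras `Pi`, `Pj` (rank-3) with distinct centers, the linear
map `F ↦ Pjᵀ F Pi + Piᵀ Fᵀ Pj` has one-dimensional kernel, namely the span of the
fundamental matrix `𝓕(Pi, Pj)`; equivalently, it has rank 8. -/
theorem epiMap_ker_and_rank (Pi Pj : Matrix (Fin 3) (Fin 4) ℝ)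
    (hi : Pi.rank = 3) (hj : Pj.rank = 3)
    (hc : LinearMap.ker Pi.mulVecLin ≠ LinearMap.ker Pj.mulVecLin) :
    LinearMap.ker (epiMap Pi Pj) = Submodule.span ℝ {fund Pi Pj} ∧
      LinearMap.rank (epiMap Pi Pj) = 8 := by
  obtain ⟨A, M, N, hA, hM, hN, e1, e2⟩ := normal_form Pi Pj hi hj hc
  have key : (A.det) • (Nᵀ * fund Pi Pj * M) = (N.det * M.det) • fund E1c E2c := by
    rw [← Matrix.smul_mul, ← Matrix.mul_smul, ← fund_mul, e1, e2, fund_left, Matrix.smul_mul,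
      fund_right, smul_smul]
  have uA : IsUnit A := (Matrix.isUnit_iff_isUnit_det _).2 (isUnit_iff_ne_zero.2 hA)
  have uAt : IsUnit Aᵀ := (Matrix.isUnit_iff_isUnit_det _).2
    (isUnit_iff_ne_zero.2 (by rwa [Matrix.det_transpose]))
  have uM : IsUnit M := (Matrix.isUnit_iff_isUnit_det _).2 (isUnit_iff_ne_zero.2 hM)
  have uNt : IsUnit Nᵀ := (Matrix.isUnit_iff_isUnit_det _).2
    (isUnit_iff_ne_zero.2 (by rwa [Matrix.det_transpose]))
  have key2 : fund E1c E2c = (A.det / (N.det * M.det)) • (Nᵀ * fund Pi Pj * M) := by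
    rw [div_eq_inv_mul, ← smul_smul, key, smul_smul, inv_mul_cancel₀ (mul_ne_zero hN hM), one_smul]
  have hne : fund Pi Pj ≠ 0 := by
    intro h
    rw [h] at key2
    have := congrFun (congrFun key2 1) 0
    simp [fund_E] at this
  have hker : LinearMap.ker (epiMap Pi Pj) = Submodule.span ℝ {fund Pi Pj} := by
    ext F
    rw [LinearMap.mem_ker, Submodule.mem_span_singleton]
    have s1 : epiMap Pi Pj F = 0 ↔ Aᵀ * (epiMap Pi Pj F) * A = 0 := by
      rw [uA.mul_left_eq_zero, uAt.mul_right_eq_zero]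
    have s2 : Aᵀ * (epiMap Pi Pj F) * A
        = E2cᵀ * (Nᵀ * F * M) * E1c + E1cᵀ * (Nᵀ * F * M)ᵀ * E2c := by
      have t1 := congrArg Matrix.transpose e1
      have t2 := congrArg Matrix.transpose e2
      simp only [Matrix.transpose_mul] at t1 t2
      calc _ = (Aᵀ * Pjᵀ) * F * (Pi * A) + (Aᵀ * Piᵀ) * Fᵀ * (Pj * A) := by
            simp only [epiMap, LinearMap.coe_mk, AddHom.coe_mk, Matrix.mul_add, Matrix.add_mul,
              Matrix.mul_assoc]
        _ = _ := by
            rw [t1, t2, e1, e2]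
            simp only [Matrix.transpose_mul, Matrix.transpose_transpose, Matrix.mul_assoc]
    rw [s1, s2, ker_E]
    constructor
    · rintro ⟨c, h⟩
      rw [key2, smul_smul, ← Matrix.smul_mul, ← Matrix.mul_smul] at h
      exact ⟨_, (uNt.mul_left_cancel (uM.mul_right_cancel h)).symm⟩
    · rintro ⟨c, rfl⟩
      refine ⟨c * ((N.det * M.det) / A.det), ?_⟩
      rw [key2, smul_smul, Matrix.mul_smul, Matrix.smul_mul]
      congr 1
      field_simp
  refine ⟨hker, ?_⟩
  have h1 := (epiMap Pi Pj).finrank_range_add_finrank_ker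
  rw [hker, finrank_span_singleton hne, Module.finrank_matrix] at h1
  simp at h1
  rw [LinearMap.rank, ← Module.finrank_eq_rank]
  have h2 : Module.finrank ℝ (LinearMap.range (epiMap Pi Pj)) = 8 := by omega
  rw [h2]
  norm_num
end

section
/- For all real 3×4 matrices P_i and P_j, the determinant of the 3×3 matrix 𝓕(P_i, P_j) is zero (the fundamental matrix always has rank at most 2). -/
open Matrix

lemma five_term (a b d u v c : Fin 4 → ℝ) :
    (a ⬝ᵥ c) * (Matrix.of ![b, d, u, v]).det - (b ⬝ᵥ c) * (Matrix.of ![a, d, u, v]).det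
      + (d ⬝ᵥ c) * (Matrix.of ![a, b, u, v]).det
    = (u ⬝ᵥ c) * (Matrix.of ![a, b, d, v]).det - (v ⬝ᵥ c) * (Matrix.of ![a, b, d, u]).det := by
  simp [Matrix.det_succ_row_zero, Fin.sum_univ_succ, dotProduct, Fin.succAbove]
  ring

lemma fund_apply_eq (P Q : Matrix (Fin 3) (Fin 4) ℝ) (h k : Fin 3) :
    fund P Q h k = (-1 : ℝ) ^ ((h : ℕ) + (k : ℕ)) *
      (Matrix.of ![P (k.succAbove 0), P (k.succAbove 1),
        Q (h.succAbove 0), Q (h.succAbove 1)]).det := by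
  unfold fund
  rw [Matrix.of_apply]
  congr 2
  ext r c
  fin_cases r <;> rfl

/-- the determinant of the fundamental matrix is always zero
(the fundamental matrix has rank at most 2). -/
theorem fund_det_eq_zero (Pi Pj : Matrix (Fin 3) (Fin 4) ℝ) :
    (fund Pi Pj).det = 0 := by
  obtain ⟨c, hc, hc0⟩ := Submodule.exists_mem_ne_zero_of_ne_bot
    (LinearMap.ker_ne_bot_of_finrank_lt (f := Pj.mulVecLin) (by simp))
  have hQ : ∀ i, Pj i ⬝ᵥ c = 0 := fun i => congrFun (LinearMap.mem_ker.1 hc) i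
  by_cases he : Pi *ᵥ c = 0
  · have hP : ∀ i, Pi i ⬝ᵥ c = 0 := fun i => congrFun he i
    have : fund Pi Pj = 0 := by
      ext h k
      rw [fund_apply_eq, Matrix.exists_mulVec_eq_zero_iff.1 ⟨c, hc0, ?_⟩]
      · simp
      · ext r
        fin_cases r
        · exact hP _
        · exact hP _
        · exact hQ _
        · exact hQ _
    rw [this]
    simp
  · refine Matrix.exists_mulVec_eq_zero_iff.1 ⟨Pi *ᵥ c, he, ?_⟩
    ext h
    have key := five_term (Pi 0) (Pi 1) (Pi 2) (Pj (h.succAbove 0)) (Pj (h.succAbove 1)) c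
    rw [hQ, hQ] at key
    have e : ∀ k, (Pi *ᵥ c) k = Pi k ⬝ᵥ c := fun _ => rfl
    have s00 : (0 : Fin 3).succAbove (0 : Fin 2) = 1 := rfl
    have s01 : (0 : Fin 3).succAbove (1 : Fin 2) = 2 := rfl
    have s10 : (1 : Fin 3).succAbove (0 : Fin 2) = 0 := rfl
    have s11 : (1 : Fin 3).succAbove (1 : Fin 2) = 2 := rfl
    have s20 : (2 : Fin 3).succAbove (0 : Fin 2) = 0 := rfl
    have s21 : (2 : Fin 3).succAbove (1 : Fin 2) = 1 := rfl
    have v0 : ((0 : Fin 3) : ℕ) = 0 := rfl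
    have v1 : ((1 : Fin 3) : ℕ) = 1 := rfl
    have v2 : ((2 : Fin 3) : ℕ) = 2 := rfl
    change ∑ k, fund Pi Pj h k * (Pi *ᵥ c) k = 0
    rw [Fin.sum_univ_three, e, e, e, fund_apply_eq, fund_apply_eq, fund_apply_eq,
      s00, s01, s10, s11, s20, s21, v0, v1, v2]
    linear_combination (-1 : ℝ) ^ (h : ℕ) * key
end
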